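/- arXiv:2602.16530 — 2 statements merged into one kernel-verified Lean document; each statement's English description precedes it below -/
import Mathlib

section
/- For every positive integer n and every continuous function f : [0,1]^n → ℝ, there exist continuous functions φ_i : ℝ → ℝ for i = 1, …, 2n+1 and continuous functions ψ_{i,q} : [0,1] → ℝ for i = 1, …, 2n+1 and q = 1, …, n such that f(x_1, …, x_n) = ∑_{i=1}^{2n+1} φ_i( ∑_{q=1}^{n} ψ_{i,q}(x_q) ) for all (x_1, …, x_n) ∈ [0,1]^n. -/
/-!
Fix inner functions `ψ` and consider the linear operator `T φ = ∑ i, φ i ∘ (∑ q, ψ i q)` on tuples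
of bounded continuous outer functions. If `n` is the number of variables and `N > 2 * n` the number
of outer functions, then for each `g ≠ 0` and each `θ` with `2 * n / N < θ < 1`, generic inner
functions admit a `φ` with `‖φ‖ ≤ ‖g‖` and `‖g - T φ‖ < θ * ‖g‖`. This is an open condition on
`ψ`. For density, perturb `ψ` so that `ψ i q` is constant on most of `[0, 1]`, with gaps arranged
such that every number lies in the gap of at most one index `i`. Then `∑ q, ψ i q` takes finitely
many values on a union of small boxes, generically a different one on each box, and `φ i` can be
chosen so that `φ i ∘ (∑ q, ψ i q)` is nearly `g / N` there. Each point of the cube misses the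
boxes for at most `n` indices, each of which contributes an error of at most `2 * ‖g‖ / N`.

By Baire's theorem a single `ψ` works for all `g` in a countable dense set, hence, with a slightly
larger `θ`, for all `g`; summing the corrections of the successive residuals shows that `T` is
surjective.
-/

open Set Filter Topology Fintype TopologicalSpace
open scoped unitInterval BoundedContinuousFunction

namespace KolmogorovSuperposition

section ApproximatePreimages

variable {𝕜 E F : Type*} [NormedField 𝕜] [NormedAddCommGroup E] [NormedSpace 𝕜 E]
  [NormedAddCommGroup F] [NormedSpace 𝕜 F] {T : E →L[𝕜] F} {C θ : ℝ}

theorem surjective_of_forall_exists_approx_preimage [CompleteSpace E] (hθ₀ : 0 ≤ θ) (hθ : θ < 1)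
    (hC : 0 ≤ C) (happrox : ∀ y, ∃ x, ‖x‖ ≤ C * ‖y‖ ∧ ‖y - T x‖ ≤ θ * ‖y‖) :
    Function.Surjective T := by
  choose r hr hres using happrox
  intro y
  let residual : ℕ → F := fun k ↦ (fun z ↦ z - T (r z))^[k] y
  have residual_succ (k : ℕ) : residual (k + 1) = residual k - T (r (residual k)) :=
    Function.iterate_succ_apply' ..
  have norm_residual_le (k : ℕ) : ‖residual k‖ ≤ θ ^ k * ‖y‖ := by
    induction k with
    | zero => simp [residual]
    | succ k ih =>
      calc ‖residual (k + 1)‖ ≤ θ * ‖residual k‖ := residual_succ k ▸ hres _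
        _ ≤ θ * (θ ^ k * ‖y‖) := by gcongr
        _ = θ ^ (k + 1) * ‖y‖ := by ring
  have geometric : Summable fun k ↦ θ ^ k * ‖y‖ :=
    (summable_geometric_of_lt_one hθ₀ hθ).mul_right _
  have summable_corrections : Summable fun k ↦ r (residual k) :=
    .of_norm_bounded (geometric.mul_left C) fun k ↦ (hr _).trans <| by
      gcongr; exact norm_residual_le k
  have residual_tendsto : Tendsto residual atTop (𝓝 0) :=
    squeeze_zero_norm norm_residual_le geometric.tendsto_atTop_zero
  have telescope (N : ℕ) : ∑ k ∈ Finset.range N, T (r (residual k)) = y - residual N := by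
    simpa [residual_succ, residual] using Finset.sum_range_sub' residual N
  refine ⟨∑' k, r (residual k), tendsto_nhds_unique
    (T.hasSum summable_corrections.hasSum).tendsto_sum_nat ?_⟩
  simpa [telescope] using tendsto_const_nhds.sub residual_tendsto

theorem surjective_of_dense_approx_preimage [CompleteSpace E] {D : Set F} (hD : Dense D)
    (hθ₀ : 0 ≤ θ) (hθ : θ < 1) (hC : 0 ≤ C)
    (happrox : ∀ y ∈ D, ∃ x, ‖x‖ ≤ C * ‖y‖ ∧ ‖y - T x‖ ≤ θ * ‖y‖) :
    Function.Surjective T := by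
  obtain ⟨η, hη₀, hη⟩ : ∃ η, 0 < η ∧ η + θ * (1 + η) < 1 :=
    ⟨(1 - θ) / 3, by linarith, by nlinarith⟩
  refine surjective_of_forall_exists_approx_preimage (C := C * (1 + η)) (by positivity) hη
    (by positivity) fun y ↦ ?_
  obtain rfl | hy := eq_or_ne y 0
  · exact ⟨0, by simp⟩
  obtain ⟨z, hzD, hz⟩ := hD.exists_dist_lt y (mul_pos hη₀ (norm_pos_iff.2 hy))
  rw [dist_eq_norm] at hz
  have norm_z_le : ‖z‖ ≤ (1 + η) * ‖y‖ := by
    linarith [norm_le_norm_add_norm_sub' z y, norm_sub_rev z y]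
  obtain ⟨x, hx, hres⟩ := happrox z hzD
  refine ⟨x, ?_, ?_⟩
  · calc ‖x‖ ≤ C * ‖z‖ := hx
      _ ≤ C * ((1 + η) * ‖y‖) := by gcongr
      _ = C * (1 + η) * ‖y‖ := by ring
  · calc ‖y - T x‖ ≤ ‖y - z‖ + ‖z - T x‖ := norm_sub_le_norm_sub_add_norm_sub ..
      _ ≤ η * ‖y‖ + θ * ((1 + η) * ‖y‖) := by gcongr; exact hres.trans (by gcongr)
      _ = (η + θ * (1 + η)) * ‖y‖ := by ring

end ApproximatePreimages

theorem norm_sum_le_card_mul_add_card_mul {ι E : Type*} [Fintype ι] [SeminormedAddCommGroup E]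
    {a : ι → E} {B : Finset ι} {b c : ℝ} (hc₀ : 0 ≤ c) (hb : ∀ i ∈ B, ‖a i‖ ≤ b)
    (hc : ∀ i ∉ B, ‖a i‖ ≤ c) : ‖∑ i, a i‖ ≤ B.card * b + card ι * c := by
  classical
  have card_compl_le : (Bᶜ.card : ℝ) ≤ card ι := by exact_mod_cast Finset.card_le_univ _
  calc ‖∑ i, a i‖ = ‖∑ i ∈ B, a i + ∑ i ∈ Bᶜ, a i‖ := by rw [Finset.sum_add_sum_compl]
    _ ≤ ∑ _ ∈ B, b + ∑ _ ∈ Bᶜ, c :=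
      norm_add_le_of_le (norm_sum_le_of_le _ hb)
        (norm_sum_le_of_le _ fun i hi ↦ hc i (Finset.mem_compl.1 hi))
    _ ≤ B.card * b + card ι * c := by
      simp only [Finset.sum_const, nsmul_eq_mul]
      gcongr

theorem card_filter_exists_notMem_le {ι κ α β : Type*} [Fintype ι] [Fintype κ] {s : ι → α → β}
    {S : Set β} (hs : ∀ t, {i | s i t ∉ S}.Subsingleton) (x : κ → α)
    [DecidablePred fun i ↦ ∃ q, s i (x q) ∉ S] :
    (Finset.univ.filter fun i ↦ ∃ q, s i (x q) ∉ S).card ≤ card κ := by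
  classical
  have card_le_one (q : κ) : (Finset.univ.filter fun i ↦ s i (x q) ∉ S).card ≤ 1 :=
    Finset.card_le_one.2 fun i hi j hj ↦
      hs (x q) (Finset.mem_filter.1 hi).2 (Finset.mem_filter.1 hj).2
  calc (Finset.univ.filter fun i ↦ ∃ q, s i (x q) ∉ S).card
      = (Finset.univ.biUnion fun q ↦ Finset.univ.filter fun i ↦ s i (x q) ∉ S).card := by
        congr 1; ext; simp
    _ ≤ card κ * 1 := Finset.card_biUnion_le_card_mul _ _ _ fun q _ ↦ card_le_one q
    _ = card κ := mul_one _

theorem exists_boundedContinuousFunction_apply_eq_of_injOn {α Y : Type*} [TopologicalSpace Y]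
    [T4Space Y] {A : Set α} (hA : A.Finite) {F : α → Y} (hF : InjOn F A) {v : α → ℝ} {c : ℝ}
    (hc : 0 ≤ c) (hv : ∀ x ∈ A, |v x| ≤ c) :
    ∃ φ : Y →ᵇ ℝ, ‖φ‖ ≤ c ∧ ∀ x ∈ A, φ (F x) = v x := by
  have : Finite A := hA
  let : TopologicalSpace A := ⊥
  have : DiscreteTopology A := ⟨rfl⟩
  have embedding : IsClosedEmbedding fun x : A ↦ F x :=
    .of_continuous_injective_isClosedMap continuous_of_discreteTopology hF.injective
      fun s _ ↦ (s.toFinite.image _).isClosed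
  let values : A →ᵇ ℝ := .ofNormedAddCommGroup (fun x ↦ v x) continuous_of_discreteTopology c
    fun x ↦ hv x x.2
  obtain ⟨φ, hφ, hφv⟩ :=
    BoundedContinuousFunction.exists_extension_norm_eq_of_isClosedEmbedding values embedding
  exact ⟨φ, hφ.trans_le (BoundedContinuousFunction.norm_ofNormedAddCommGroup_le _ hc _),
    fun x hx ↦ congrFun hφv ⟨x, hx⟩⟩

section Superposition

variable {ι κ X : Type*} [Fintype ι] [Fintype κ] [TopologicalSpace X]

/-- The inner function `x ↦ ∑ q, ψ q (x q)` of a superposition, bundled as a continuous linear map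
in the family `ψ` of functions of one variable. -/
def innerSum : (κ → C(X, ℝ)) →L[ℝ] C(κ → X, ℝ) where
  toFun ψ := ∑ q, (ψ q).comp (.eval q)
  map_add' ψ₁ ψ₂ := by ext; simp [Finset.sum_add_distrib]
  map_smul' c ψ := by ext; simp [Finset.mul_sum]
  cont := by fun_prop

@[simp]
theorem innerSum_apply (ψ : κ → C(X, ℝ)) (x : κ → X) : innerSum ψ x = ∑ q, ψ q (x q) := by
  simp [innerSum]

theorem innerSum_comp (ψ : κ → C(X, ℝ)) (s : C(X, X)) :
    innerSum (fun q ↦ (ψ q).comp s) = (innerSum ψ).comp (.piMap fun _ ↦ s) := by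
  ext; simp

/-- The superposition operator `φ ↦ ∑ i, φ i ∘ innerSum (ψ i)` with inner functions `ψ`, whose
surjectivity is Kolmogorov's theorem. The outer functions are taken bounded so that they form a
Banach space. -/
noncomputable def superposition (ψ : ι → κ → C(X, ℝ)) : (ι → ℝ →ᵇ ℝ) →L[ℝ] C(κ → X, ℝ) where
  toFun φ := ∑ i, (φ i).toContinuousMap.comp (innerSum (ψ i))
  map_add' φ₁ φ₂ := by ext; simp [Finset.sum_add_distrib]
  map_smul' c φ := by ext; simp [Finset.mul_sum]
  cont := ContinuousMap.continuous_of_continuous_uncurry _ <| by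
    simp only [Function.uncurry_def, ContinuousMap.sum_apply, ContinuousMap.comp_apply,
      BoundedContinuousFunction.coe_toContinuousMap]
    fun_prop

theorem superposition_apply (ψ : ι → κ → C(X, ℝ)) (φ : ι → ℝ →ᵇ ℝ) (x : κ → X) :
    superposition ψ φ x = ∑ i, φ i (innerSum (ψ i) x) := by
  simp [superposition]

theorem continuous_superposition_left (φ : ι → ℝ →ᵇ ℝ) :
    Continuous fun ψ : ι → κ → C(X, ℝ) ↦ superposition ψ φ := by
  simp only [superposition, ContinuousLinearMap.coe_mk', LinearMap.coe_mk, AddHom.coe_mk]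
  fun_prop

end Superposition

section Generic

variable {κ X : Type*} [Fintype κ] [TopologicalSpace X] [CompactSpace X] [T2Space X]

theorem dense_setOf_innerSum_ne {y z : κ → X} (hyz : y ≠ z) :
    Dense {ψ : κ → C(X, ℝ) | innerSum ψ y ≠ innerSum ψ z} := by
  classical
  obtain ⟨q, hq⟩ := Function.ne_iff.1 hyz
  obtain ⟨f, hf, hfq⟩ := separatesPoints_continuous_of_t35Space hq
  let difference : (κ → C(X, ℝ)) →L[ℝ] ℝ :=
    (ContinuousMap.evalCLM ℝ y - ContinuousMap.evalCLM ℝ z) ∘L innerSum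
  have surjective : Function.Surjective difference := by
    have eq (r : κ → X) : ∑ p, Pi.single (M := fun _ ↦ C(X, ℝ)) q ⟨f, hf⟩ p (r p) = f (r q) := by
      rw [Finset.sum_eq_single q] <;> simp +contextual
    refine LinearMap.surjective (f := difference.toLinearMap) fun h ↦ hfq ?_
    simpa [difference, eq, sub_eq_zero] using DFunLike.congr_fun h (Pi.single q ⟨f, hf⟩)
  simpa [difference, preimage, sub_eq_zero] using
    (dense_compl_singleton (0 : ℝ)).preimage (difference.isOpenMap surjective)

theorem dense_setOf_injOn_innerSum {A : Set (κ → X)} (hA : A.Finite) :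
    Dense {ψ : κ → C(X, ℝ) | InjOn (innerSum ψ) A} := by
  have dense_inter : Dense (⋂ p ∈ A.offDiag, {ψ : κ → C(X, ℝ) | innerSum ψ p.1 ≠ innerSum ψ p.2}) :=
    dense_biInter_of_isOpen
      (fun p _ ↦ isOpen_ne_fun (by fun_prop) (by fun_prop))
      hA.offDiag.countable fun p hp ↦ dense_setOf_innerSum_ne hp.2.2
  refine dense_inter.mono fun ψ hψ y hy z hz hyz ↦ ?_
  by_contra hne
  exact mem_iInter₂.1 hψ (y, z) ⟨hy, hz, hne⟩ hyz

end Generic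

/-- A finite-step substitute for the constant family `id`: up to at most one exceptional index `i`
for each point `t`, all values `s i t` lie in a common finite set. Precomposing inner functions with
the maps `s i` makes them take finitely many values on most of the space. -/
def IsStaircaseFamily {ι X : Type*} [TopologicalSpace X] (s : ι → C(X, X)) : Prop :=
  ∃ S : Set X, S.Finite ∧ ∀ t, {i | s i t ∉ S}.Subsingleton

section Density

variable {ι κ X : Type*} [Fintype ι] [Fintype κ] [TopologicalSpace X] [CompactSpace X]

theorem norm_sub_superposition_comp_le [Nonempty ι] {s : ι → C(X, X)} {S : Set X}
    (hs : ∀ t, {i | s i t ∉ S}.Subsingleton) {χ : ι → κ → C(X, ℝ)} {φ : ι → ℝ →ᵇ ℝ}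
    {g : C(κ → X, ℝ)} {η : ℝ} (hη₀ : 0 ≤ η)
    (hη : ∀ i, ‖g - g.comp (.piMap fun _ ↦ s i)‖ ≤ η) (hφ : ∀ i, ‖φ i‖ ≤ ‖g‖ / card ι)
    (hφg : ∀ i, ∀ y ∈ univ.pi fun _ ↦ S, φ i (innerSum (χ i) y) = g y / card ι) :
    ‖g - superposition (fun i q ↦ (χ i q).comp (s i)) φ‖ ≤
      2 * card κ / card ι * ‖g‖ + η := by
  classical
  have card_pos : (0 : ℝ) < card ι := by exact_mod_cast Fintype.card_pos
  refine (ContinuousMap.norm_le _ (by positivity)).2 fun x ↦ ?_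
  let shifted (i : ι) : κ → X := fun q ↦ s i (x q)
  let error (i : ι) : ℝ := g x / card ι - φ i (innerSum (χ i) (shifted i))
  let bad : Finset ι := {i | ∃ q, s i (x q) ∉ S}
  have sum_error : (g - superposition (fun i q ↦ (χ i q).comp (s i)) φ) x = ∑ i, error i := by
    simp only [ContinuousMap.sub_apply, superposition_apply, innerSum_comp, error,
      Finset.sum_sub_distrib, Finset.sum_const, nsmul_eq_mul, Finset.card_univ]
    rw [mul_div_cancel₀ _ card_pos.ne']
    rfl
  have error_bad (i : ι) : ‖error i‖ ≤ 2 * (‖g‖ / card ι) := by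
    have h₁ : ‖g x / card ι‖ ≤ ‖g‖ / card ι := by
      rw [norm_div, Real.norm_natCast]; gcongr; exact g.norm_coe_le_norm x
    exact (norm_sub_le_of_le h₁ (((φ i).norm_coe_le_norm _).trans (hφ i))).trans_eq
      (two_mul _).symm
  have error_good (i : ι) (hi : i ∉ bad) : ‖error i‖ ≤ η / card ι := by
    have mem_nodes : shifted i ∈ univ.pi fun _ ↦ S := by simpa [bad, shifted] using hi
    have : ‖g x - g (shifted i)‖ ≤ η := (ContinuousMap.norm_coe_le_norm _ x).trans (hη i)
    simp only [error, hφg i _ mem_nodes, ← sub_div, norm_div, Real.norm_natCast]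
    gcongr
  calc ‖(g - superposition (fun i q ↦ (χ i q).comp (s i)) φ) x‖ = ‖∑ i, error i‖ := by
        rw [sum_error]
    _ ≤ bad.card * (2 * (‖g‖ / card ι)) + card ι * (η / card ι) :=
      norm_sum_le_card_mul_add_card_mul (by positivity) (fun i _ ↦ error_bad i) error_good
    _ ≤ card κ * (2 * (‖g‖ / card ι)) + card ι * (η / card ι) := by
      gcongr; exact card_filter_exists_notMem_le hs x
    _ = 2 * card κ / card ι * ‖g‖ + η := by field_simp

theorem dense_setOf_exists_approx_superposition [Nonempty ι] [T2Space X]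
    (hX : (fun _ : ι ↦ .id X) ∈ closure {s : ι → C(X, X) | IsStaircaseFamily s})
    {g : C(κ → X, ℝ)} (hg : g ≠ 0) {θ : ℝ} (hθ : 2 * card κ / card ι < θ) :
    Dense {ψ : ι → κ → C(X, ℝ) |
      ∃ φ, ‖φ‖ ≤ ‖g‖ ∧ ‖g - superposition ψ φ‖ < θ * ‖g‖} := by
  obtain ⟨η, hη₀, hη⟩ := exists_between
    (sub_pos.2 (mul_lt_mul_of_pos_right hθ (norm_pos_iff.2 hg)))
  refine dense_iff_inter_open.2 fun V hV ⟨ψ₀, hψ₀⟩ ↦ ?_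
  have eventually_mem : ∀ᶠ s in 𝓝 fun _ : ι ↦ .id X, (fun i q ↦ (ψ₀ i q).comp (s i)) ∈ V := by
    refine Continuous.continuousAt ?_ |>.eventually_mem (hV.mem_nhds hψ₀)
    exact continuous_pi fun i ↦ continuous_pi fun q ↦
      (ContinuousMap.continuous_postcomp _).comp (continuous_apply i)
  have eventually_close : ∀ᶠ s in 𝓝 fun _ : ι ↦ .id X,
      ∀ i, ‖g - g.comp (.piMap fun _ ↦ s i)‖ < η := by
    refine eventually_all.2 fun i ↦ Continuous.tendsto' ?_ _ 0 ?_ |>.eventually_lt_const hη₀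
    · refine (continuous_const.sub ?_).norm
      refine ContinuousMap.continuous_of_continuous_uncurry _ (g.continuous.comp ?_)
      change Continuous fun p : (ι → C(X, X)) × (κ → X) ↦ fun q ↦ p.1 i (p.2 q)
      fun_prop
    · exact norm_eq_zero.2 (sub_self g)
  obtain ⟨s, ⟨S, hS, hs⟩, hsV, hsη⟩ :=
    ((mem_closure_iff_frequently.1 hX).and_eventually (eventually_mem.and eventually_close)).exists
  have nodes_finite : (univ.pi fun _ : κ ↦ S).Finite := .pi fun _ ↦ hS
  obtain ⟨χ, hχV, hχ⟩ :=
    (dense_pi univ fun (i : ι) _ ↦ dense_setOf_injOn_innerSum nodes_finite).inter_open_nonempty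
      ((fun χ i q ↦ (χ i q).comp (s i)) ⁻¹' V) (hV.preimage (by fun_prop)) ⟨ψ₀, hsV⟩
  choose φ hφ hφg using fun i ↦
    exists_boundedContinuousFunction_apply_eq_of_injOn nodes_finite (hχ i trivial)
      (v := fun y ↦ g y / card ι) (c := ‖g‖ / card ι) (by positivity) fun y _ ↦ by
        rw [abs_div, Nat.abs_cast]; gcongr; exact g.norm_coe_le_norm y
  refine ⟨_, hχV, φ, ?_, ?_⟩
  · refine (pi_norm_le_iff_of_nonneg (norm_nonneg _)).2 fun i ↦ (hφ i).trans ?_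
    exact div_le_self (norm_nonneg _) (by exact_mod_cast Fintype.card_pos)
  · linarith [norm_sub_superposition_comp_le hs hη₀.le (fun i ↦ (hsη i).le) hφ hφg]

theorem isOpen_setOf_exists_approx_superposition (g : C(κ → X, ℝ)) (C ε : ℝ) :
    IsOpen {ψ : ι → κ → C(X, ℝ) | ∃ φ, ‖φ‖ ≤ C ∧ ‖g - superposition ψ φ‖ < ε} := by
  rw [ofPred_exists]
  exact isOpen_iUnion fun φ ↦ isOpen_const.and <|
    isOpen_lt (continuous_const.sub (continuous_superposition_left φ)).norm continuous_const

theorem exists_surjective_superposition [MetrizableSpace X]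
    (hX : (fun _ : ι ↦ .id X) ∈ closure {s : ι → C(X, X) | IsStaircaseFamily s})
    (hcard : 2 * card κ < card ι) :
    ∃ ψ : ι → κ → C(X, ℝ), Function.Surjective (superposition ψ) := by
  have : Nonempty ι := card_pos_iff.1 (by lia)
  have ratio_lt_one : (2 * card κ / card ι : ℝ) < 1 := by
    rw [div_lt_one (by exact_mod_cast card_pos)]; exact_mod_cast hcard
  obtain ⟨θ, hθ, hθ₁⟩ := exists_between ratio_lt_one
  have : IsCompletelyPseudoMetrizableSpace (κ → C(X, ℝ)) := inferInstance
  have : BaireSpace (ι → κ → C(X, ℝ)) := .of_completelyPseudoMetrizable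
  obtain ⟨D, hDc, hD⟩ := exists_countable_dense C(κ → X, ℝ)
  obtain ⟨ψ, hψ⟩ := (dense_biInter_of_isOpen
    (fun g _ ↦ isOpen_setOf_exists_approx_superposition (ι := ι) g ‖g‖ (θ * ‖g‖))
    (hDc.mono sdiff_subset)
    fun g (hg : g ∈ D \ {0}) ↦ dense_setOf_exists_approx_superposition hX hg.2 hθ).nonempty
  refine ⟨ψ, surjective_of_dense_approx_preimage hD (C := 1)
    ((by positivity : (0 : ℝ) ≤ 2 * card κ / card ι).trans hθ.le) hθ₁ zero_le_one fun g hg ↦ ?_⟩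
  obtain rfl | hg₀ := eq_or_ne g 0
  · exact ⟨0, by simp⟩
  obtain ⟨φ, hφ, hφg⟩ := mem_iInter₂.1 hψ g ⟨hg, hg₀⟩
  exact ⟨φ, by rwa [one_mul], hφg.le⟩

end Density

section Stairs

/-- The continuous staircase that rises from `⌊u⌋` to `⌊u⌋ + 1` on the first `1 / m` of each unit
interval and is constant on the rest of it. -/
noncomputable def stairs (m : ℕ) (u : ℝ) : ℝ := ⌊u⌋ + min 1 (m * Int.fract u)

variable {m : ℕ}

theorem continuous_stairs (hm : m ≠ 0) : Continuous (stairs m) := by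
  have one_le : (1 : ℝ) ≤ m := by exact_mod_cast Nat.one_le_iff_ne_zero.2 hm
  have continuous_excess : Continuous ((fun r : ℝ ↦ min 1 (m * r) - r) ∘ Int.fract) :=
    ContinuousOn.comp_fract'' (by fun_prop) (by simp [one_le])
  refine (continuous_id.add continuous_excess).congr fun u ↦ ?_
  change u + (min 1 (m * Int.fract u) - Int.fract u) = ⌊u⌋ + min 1 (m * Int.fract u)
  linarith [Int.floor_add_fract u]

theorem stairs_sub_self_mem_Icc (hm : m ≠ 0) (u : ℝ) : stairs m u - u ∈ Icc (0 : ℝ) 1 := by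
  have one_le : (1 : ℝ) ≤ m := by exact_mod_cast Nat.one_le_iff_ne_zero.2 hm
  have fract_le : Int.fract u ≤ min 1 (m * Int.fract u) :=
    le_min (Int.fract_lt_one u).le (le_mul_of_one_le_left (Int.fract_nonneg u) one_le)
  rw [stairs, mem_Icc]
  constructor <;>
    linarith [Int.floor_add_fract u, Int.fract_nonneg u, min_le_left 1 (m * Int.fract u)]

theorem mul_fract_lt_one_of_stairs_notMem_range {u : ℝ}
    (hu : stairs m u ∉ range ((↑) : ℤ → ℝ)) : m * Int.fract u < 1 := by
  contrapose! hu
  exact ⟨⌊u⌋ + 1, by simp [stairs, hu]⟩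

theorem floor_mul_emod_eq_of_mul_fract_sub_lt_one {k : ℕ} (hk : k < m) {u : ℝ}
    (hu : m * Int.fract (u - k / m) < 1) : ⌊m * u⌋ % m = k := by
  have m_pos : (0 : ℝ) < m := by exact_mod_cast k.zero_le.trans_lt hk
  have mul_eq : m * u = m * Int.fract (u - k / m) + (k + m * ⌊u - k / m⌋ : ℤ) := by
    have := Int.floor_add_fract (u - k / m)
    push_cast
    field_simp at *
    linarith
  have floor_zero : ⌊(m : ℝ) * Int.fract (u - k / m)⌋ = 0 :=
    Int.floor_eq_zero_iff.2 ⟨mul_nonneg m_pos.le (Int.fract_nonneg _), hu⟩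
  rw [mul_eq, Int.floor_add_intCast, floor_zero, zero_add, Int.add_mul_emod_self_left]
  exact Int.emod_eq_of_lt (by positivity) (by exact_mod_cast hk)

/-- The points of `[0, 1]` that are integer multiples of `1 / K`, the levels of the steps of
`unitStairs`. All integers `j` are admitted: those outside `[0, K]` give the endpoints. -/
def unitGrid (K : ℕ) : Set I := range fun j : ℤ ↦ projIcc 0 1 zero_le_one (j / K : ℝ)

theorem finite_unitGrid {K : ℕ} (hK : K ≠ 0) : (unitGrid K).Finite := by
  have K_pos : (0 : ℝ) < K := by positivity
  refine ((finite_Icc (0 : ℤ) K).image fun j : ℤ ↦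
    projIcc 0 1 zero_le_one (j / K : ℝ)).subset ?_
  rintro _ ⟨j, rfl⟩
  obtain hj | hj := lt_or_ge j 0
  · have : (j / K : ℝ) ≤ 0 := div_nonpos_of_nonpos_of_nonneg (by exact_mod_cast hj.le) K_pos.le
    exact ⟨0, by simp, by simp [projIcc_of_le_left, this]⟩
  obtain hjK | hjK := le_or_gt j K
  · exact ⟨j, ⟨hj, hjK⟩, rfl⟩
  · have : 1 ≤ (j / K : ℝ) := (one_le_div K_pos).2 (by exact_mod_cast hjK.le)
    exact ⟨K, by simp, by simp [projIcc_of_right_le, this, hK]⟩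

/-- The staircase on `[0, 1]` with steps of length `1 / K` in which the steps are shifted by
`k / m` of their length, so that the rising parts for distinct `k < m` are disjoint. -/
noncomputable def unitStairs (m K : ℕ) (hm : m ≠ 0) (k : ℕ) : C(I, I) where
  toFun t := projIcc 0 1 zero_le_one (stairs m (K * t - k / m) / K)
  continuous_toFun := continuous_projIcc.comp <|
    ((continuous_stairs hm).comp (by fun_prop)).div_const _

theorem dist_unitStairs_le {K : ℕ} (hK : K ≠ 0) (hm : m ≠ 0) {k : ℕ} (hk : k < m) :
    dist (unitStairs m K hm k) (.id I) ≤ 1 / K := by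
  have K_pos : (0 : ℝ) < K := by positivity
  refine (ContinuousMap.dist_le (by positivity)).2 fun t ↦ ?_
  set u : ℝ := K * t - k / m with hu
  have shift_mem : (k / m : ℝ) ∈ Icc (0 : ℝ) 1 :=
    ⟨by positivity, div_le_one_of_le₀ (by exact_mod_cast hk.le) (by positivity)⟩
  calc dist (unitStairs m K hm k t) t
      = dist (projIcc 0 1 zero_le_one (stairs m u / K)) (projIcc 0 1 zero_le_one (t : ℝ)) := by
        rw [projIcc_val zero_le_one t]; rfl
    _ ≤ |stairs m u / K - t| := abs_projIcc_sub_projIcc zero_le_one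
    _ = |(stairs m u - u) - k / m| / K := by
      rw [← abs_of_pos K_pos, ← abs_div, abs_of_pos K_pos, hu]
      congr 1
      field_simp
      ring
    _ ≤ 1 / K := by
      gcongr
      have := stairs_sub_self_mem_Icc hm u
      exact abs_sub_le_iff.2 ⟨by linarith [this.2, shift_mem.1], by linarith [this.1, shift_mem.2]⟩

theorem subsingleton_setOf_unitStairs_notMem (K : ℕ) (hm : m ≠ 0) (t : I) :
    {k : Fin m | unitStairs m K hm k t ∉ unitGrid K}.Subsingleton := by
  have residue (k : Fin m) (hk : unitStairs m K hm k t ∉ unitGrid K) :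
      ⌊m * (K * t : ℝ)⌋ % m = k :=
    floor_mul_emod_eq_of_mul_fract_sub_lt_one k.2 <|
      mul_fract_lt_one_of_stairs_notMem_range fun ⟨j, hj⟩ ↦ hk ⟨j, by simp [unitStairs, hj]⟩
  intro k hk l hl
  exact Fin.ext <| by exact_mod_cast (residue k hk).symm.trans (residue l hl)

theorem id_mem_closure_isStaircaseFamily (ι : Type*) [Finite ι] [Nonempty ι] :
    (fun _ : ι ↦ .id I) ∈ closure {s : ι → C(I, I) | IsStaircaseFamily s} := by
  have : Fintype ι := ofFinite ι
  refine Metric.mem_closure_iff.2 fun δ hδ ↦ ?_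
  obtain ⟨K, hK⟩ := exists_nat_one_div_lt hδ
  have m_ne_zero : Nat.card ι ≠ 0 := Nat.card_pos.ne'
  let index : ι ≃ Fin (Nat.card ι) := Finite.equivFin ι
  refine ⟨fun i ↦ unitStairs (Nat.card ι) (K + 1) m_ne_zero (index i),
    ⟨unitGrid (K + 1), finite_unitGrid K.succ_ne_zero, fun t ↦ ?_⟩, ?_⟩
  · exact (subsingleton_setOf_unitStairs_notMem (K + 1) m_ne_zero t).preimage index.injective
  · rw [dist_comm, dist_pi_lt_iff hδ]
    exact fun i ↦ (dist_unitStairs_le K.succ_ne_zero m_ne_zero (index i).2).trans_lt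
      (by exact_mod_cast hK)

end Stairs

end KolmogorovSuperposition

open KolmogorovSuperposition

theorem kolmogorov_superposition_general {ι κ : Type*} [Fintype ι] [Fintype κ]
    (hcard : 2 * card κ < card ι) :
    ∃ ψ : ι → κ → ℝ → ℝ, (∀ i q, Continuous (ψ i q)) ∧
      ∀ f : (κ → ℝ) → ℝ, ContinuousOn f (Icc 0 1) →
        ∃ φ : ι → ℝ → ℝ, (∀ i, Continuous (φ i)) ∧
          ∀ x ∈ Icc (0 : κ → ℝ) 1, f x = ∑ i, φ i (∑ q, ψ i q (x q)) := by
  have : Nonempty ι := card_pos_iff.1 (by lia)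
  obtain ⟨ψ, hψ⟩ := exists_surjective_superposition (id_mem_closure_isStaircaseFamily ι) hcard
  refine ⟨fun i q ↦ IccExtend zero_le_one (ψ i q), fun i q ↦ (ψ i q).continuous.Icc_extend',
    fun f hf ↦ ?_⟩
  let g : C(κ → I, ℝ) := ⟨fun y ↦ f fun q ↦ y q, hf.comp_continuous (by fun_prop) fun y ↦
    ⟨fun q ↦ (y q).2.1, fun q ↦ (y q).2.2⟩⟩
  obtain ⟨φ, hφ⟩ := hψ g
  refine ⟨fun i ↦ φ i, fun i ↦ (φ i).continuous, fun x hx ↦ ?_⟩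
  have x_mem (q : κ) : x q ∈ I := ⟨hx.1 q, hx.2 q⟩
  calc f x = superposition ψ φ fun q ↦ ⟨x q, x_mem q⟩ := by rw [hφ]; rfl
    _ = ∑ i, φ i (∑ q, IccExtend zero_le_one (ψ i q) (x q)) := by
      simp only [superposition_apply, innerSum_apply, IccExtend_of_mem _ _ (x_mem _)]

/-- **Classical Kolmogorov Superposition Theorem.**
For every positive integer `n` and every continuous function `f : [0,1]^n → ℝ`,
there exist continuous outer functions `φ i : ℝ → ℝ` (`i = 1, …, 2n+1`) and
continuous inner functions `ψ i q : [0,1] → ℝ` such that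
`f x = ∑ i, φ i (∑ q, ψ i q (x q))` on the cube. -/
theorem kolmogorov_superposition
    (n : ℕ) (hn : 0 < n)
    (f : (Fin n → ℝ) → ℝ)
    (hf : ContinuousOn f (Set.Icc (0 : Fin n → ℝ) 1)) :
    ∃ (φ : Fin (2 * n + 1) → ℝ → ℝ) (ψ : Fin (2 * n + 1) → Fin n → ℝ → ℝ),
      (∀ i, Continuous (φ i)) ∧
      (∀ i q, ContinuousOn (ψ i q) (Set.Icc (0 : ℝ) 1)) ∧
      (∀ x ∈ Set.Icc (0 : Fin n → ℝ) 1,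
        f x = ∑ i, φ i (∑ q, ψ i q (x q))) := by
  obtain ⟨ψ, hψ, hrep⟩ :=
    kolmogorov_superposition_general (ι := Fin (2 * n + 1)) (κ := Fin n) (by simp)
  obtain ⟨φ, hφ, hfx⟩ := hrep f hf
  exact ⟨φ, ψ, hφ, fun i q ↦ (hψ i q).continuousOn, hfx⟩
end

section
/- Let n, m be positive integers, let u_1, …, u_m : [0,1]^n → ℝ be continuous functions, and let f : ℝ^{n+m} → ℝ be continuous. Then there exist continuous functions φ_i : ℝ → ℝ for i = 1, …, 2(n+m)+1 and continuous functions ψ_{i,q} : ℝ → ℝ for i = 1, …, 2(n+m)+1 and q = 1, …, n+m such that for every x = (x_1, …, x_n) ∈ [0,1]^n, f(x_1, …, x_n, u_1(x), …, u_m(x)) = ∑_{i=1}^{2(n+m)+1} φ_i( ∑_{q=1}^{n} ψ_{i,q}(x_q) + ∑_{j=1}^{m} ψ_{i,n+j}(u_j(x)) ). -/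
/-!
The argument is by Baire category. For fixed inner functions `ψ`, the
superposition is a continuous linear operator in the outer functions `φ`. By successive
approximation it is surjective as soon as it reproduces each `f` in a dense set, with `‖φ‖ ≤ ‖f‖`,
up to an error `θ * ‖f‖` for some fixed `θ < 1`. For a single `f ≠ 0` the set of such `ψ` is open,
and it suffices to show that it is dense: a countable intersection then provides one `ψ` that serves
a whole dense set of functions `f`.

For density, let `N` be the number of variables and `K > 2 * N` the number of outer functions. Given
`ψ`, replace `ψ i q` by `g i q ∘ r i`, where `r 1, …, r K` are mutually shifted fine staircases, so
that at every point of the line all but at most one of them lie in a fixed finite set `S`, and `g`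
is a generic perturbation of `ψ`, so that `z ↦ ∑ q, g i q (z q)` is injective on the finite grid of
points with coordinates in `S`. Hence some `φ i` satisfies `φ i (∑ q, g i q (z q)) = f z` on this
grid. At a given point at most `N` of the `K` indices fail to have all coordinates on the grid, the
others reproduce `f` up to a small error, and so `∑ i, φ i / (K - N)` has relative error close to
`N / (K - N) < 1`.

Applied on a cube containing the bounded set `{(x, u x)}`, this handles the features as additional
variables.
-/

open Set Filter Topology BoundedContinuousFunction

section ApproximateSurjectivity

variable {𝕜 E F : Type*} [NormedField 𝕜] [NormedAddCommGroup E] [NormedSpace 𝕜 E]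
  [NormedAddCommGroup F] [NormedSpace 𝕜 F] {T : E →L[𝕜] F} {C θ : ℝ}

theorem surjective_of_exists_norm_sub_le [CompleteSpace E] (hθ₀ : 0 ≤ θ) (hθ : θ < 1)
    (h : ∀ y, ∃ x, ‖x‖ ≤ C * ‖y‖ ∧ ‖y - T x‖ ≤ θ * ‖y‖) : Function.Surjective T := by
  intro y
  choose S hS hTS using h
  let res : ℕ → F := fun k ↦ (fun z ↦ z - T (S z))^[k] y
  have res_succ (k : ℕ) : res (k + 1) = res k - T (S (res k)) := Function.iterate_succ_apply' ..
  have norm_res (k : ℕ) : ‖res k‖ ≤ θ ^ k * ‖y‖ :=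
    le_geom (u := fun k ↦ ‖res k‖) hθ₀ k fun j _ ↦ by simpa only [res_succ] using hTS (res j)
  have tendsto_res : Tendsto res atTop (𝓝 0) :=
    squeeze_zero_norm norm_res <| by
      simpa using (tendsto_pow_atTop_nhds_zero_of_lt_one hθ₀ hθ).mul_const ‖y‖
  have summable : Summable fun k ↦ S (res k) := by
    refine .of_norm_bounded (((summable_geometric_of_lt_one hθ₀ hθ).mul_right ‖y‖).mul_left |C|)
      fun k ↦ (hS _).trans ?_
    gcongr
    exacts [le_abs_self C, norm_res k]
  have partial_sum (n : ℕ) : ∑ k ∈ Finset.range n, T (S (res k)) = y - res n := by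
    refine Eq.trans ?_ (Finset.sum_range_sub' res n)
    exact Finset.sum_congr rfl fun k _ ↦ by rw [res_succ, sub_sub_cancel]
  refine ⟨∑' k, S (res k), tendsto_nhds_unique (summable.hasSum.mapL T).tendsto_sum_nat ?_⟩
  simpa [partial_sum] using tendsto_res.const_sub y

theorem exists_norm_sub_le_of_dense {D : Set F} (hD : Dense D) (hC : 0 ≤ C) {θ' : ℝ}
    (hθ : θ < θ') (h : ∀ d ∈ D, d ≠ 0 → ∃ x, ‖x‖ ≤ C * ‖d‖ ∧ ‖d - T x‖ ≤ θ * ‖d‖) (y : F) :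
    ∃ x, ‖x‖ ≤ C * 2 * ‖y‖ ∧ ‖y - T x‖ ≤ θ' * ‖y‖ := by
  obtain rfl | hy := eq_or_ne y 0
  · exact ⟨0, by simp⟩
  have hy_pos : 0 < ‖y‖ := norm_pos_iff.2 hy
  have isOpen_near : IsOpen {d : F | d ≠ 0 ∧ ‖d‖ < 2 * ‖y‖ ∧ ‖y - d‖ + θ * ‖d‖ < θ' * ‖y‖} :=
    isOpen_ne.and <| (isOpen_lt continuous_norm continuous_const).and <|
      isOpen_lt (by fun_prop) continuous_const
  obtain ⟨d, hdD, hd, hdy, hdist⟩ := hD.exists_mem_open isOpen_near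
    ⟨y, hy, by linarith, by simpa using mul_lt_mul_of_pos_right hθ hy_pos⟩
  obtain ⟨x, hx, hTx⟩ := h d hdD hd
  refine ⟨x, ?_, ?_⟩
  · calc ‖x‖ ≤ C * ‖d‖ := hx
      _ ≤ C * (2 * ‖y‖) := by gcongr
      _ = C * 2 * ‖y‖ := by ring
  · calc ‖y - T x‖ ≤ ‖y - d‖ + ‖d - T x‖ := norm_sub_le_norm_sub_add_norm_sub ..
      _ ≤ ‖y - d‖ + θ * ‖d‖ := by gcongr
      _ ≤ θ' * ‖y‖ := hdist.le

theorem surjective_of_dense_of_exists_norm_sub_le [CompleteSpace E] {D : Set F} (hD : Dense D)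
    (hC : 0 ≤ C) (hθ₀ : 0 ≤ θ) (hθ : θ < 1)
    (h : ∀ d ∈ D, d ≠ 0 → ∃ x, ‖x‖ ≤ C * ‖d‖ ∧ ‖d - T x‖ ≤ θ * ‖d‖) :
    Function.Surjective T := by
  obtain ⟨θ', hθθ', hθ'⟩ := exists_between hθ
  exact surjective_of_exists_norm_sub_le (hθ₀.trans hθθ'.le) hθ'
    (exists_norm_sub_le_of_dense hD hC hθθ' h)

end ApproximateSurjectivity

section FiniteInterpolation

theorem exists_boundedContinuousFunction_comp_eq {α Y : Type*} [Finite α] [TopologicalSpace Y]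
    [T4Space Y] {e : α → Y} (he : Function.Injective e) {v : α → ℝ} {M : ℝ} (hM : 0 ≤ M)
    (hv : ∀ a, |v a| ≤ M) : ∃ φ : Y →ᵇ ℝ, ‖φ‖ ≤ M ∧ ∀ a, φ (e a) = v a := by
  let _ : TopologicalSpace α := ⊥
  have : DiscreteTopology α := ⟨rfl⟩
  have he' : IsClosedEmbedding e :=
    .of_continuous_injective_isClosedMap continuous_of_discreteTopology he
      fun s _ ↦ (s.toFinite.image e).isClosed
  obtain ⟨φ, hφ, hφe⟩ := exists_extension_norm_eq_of_isClosedEmbedding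
    (ofNormedAddCommGroupDiscrete v M hv) he'
  exact ⟨φ, hφ.trans_le (norm_ofNormedAddCommGroup_le _ hM hv), congrFun hφe⟩

end FiniteInterpolation

section GenericInjectivity

theorem dense_setOf_apply_ne_zero {𝕜 E : Type*} [NontriviallyNormedField 𝕜] [AddCommGroup E]
    [TopologicalSpace E] [Module 𝕜 E] [ContinuousAdd E] [ContinuousSMul 𝕜 E] {L : E →L[𝕜] 𝕜}
    (hL : L ≠ 0) : Dense {x | L x ≠ 0} := by
  refine interior_eq_empty_iff_dense_compl.1 <| not_nonempty_iff_eq_empty.1 fun h ↦ hL ?_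
  have := (L : E →ₗ[𝕜] 𝕜).ker.eq_top_of_nonempty_interior' h
  ext x
  exact (this ▸ Submodule.mem_top : x ∈ (L : E →ₗ[𝕜] 𝕜).ker)

variable {ι X : Type*} [Fintype ι] [MetricSpace X] [CompactSpace X]

theorem dense_setOf_sum_ne_sum {z z' : ι → X} (hz : z ≠ z') :
    Dense {g : ι → C(X, ℝ) | ∑ q, g q (z q) ≠ ∑ q, g q (z' q)} := by
  classical
  let L : (ι → C(X, ℝ)) →L[ℝ] ℝ := ∑ q,
    (ContinuousMap.evalCLM ℝ (z q) - ContinuousMap.evalCLM ℝ (z' q)) ∘L ContinuousLinearMap.proj q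
  have L_apply (g : ι → C(X, ℝ)) : L g = ∑ q, g q (z q) - ∑ q, g q (z' q) := by
    simp [L, Finset.sum_sub_distrib]
  obtain ⟨p, hp⟩ := Function.ne_iff.1 hz
  have hL : L ≠ 0 := fun h ↦ by
    have := DFunLike.congr_fun h (Pi.single p ⟨fun x ↦ dist x (z' p), by fun_prop⟩)
    rw [L_apply, ← Finset.sum_sub_distrib, Finset.sum_eq_single p] at this
    · simp [hp] at this
    · intro q _ hq
      simp [Pi.single_eq_of_ne hq]
    · simp
  simpa only [L_apply, sub_ne_zero] using dense_setOf_apply_ne_zero hL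

theorem dense_setOf_injective_sum {S : Set X} (hS : S.Countable) :
    Dense {g : ι → C(X, ℝ) | Function.Injective fun z : ι → S ↦ ∑ q, g q (z q)} := by
  have := hS.to_subtype
  have hdense : Dense (⋂ p ∈ {p : (ι → S) × (ι → S) | p.1 ≠ p.2},
      {g : ι → C(X, ℝ) | ∑ q, g q (p.1 q) ≠ ∑ q, g q (p.2 q)}) := by
    refine dense_biInter_of_isOpen (fun p _ ↦ isOpen_ne_fun (by fun_prop) (by fun_prop))
      (to_countable _) fun p hp ↦ dense_setOf_sum_ne_sum fun h ↦ hp ?_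
    exact funext fun q ↦ Subtype.ext (congrFun h q)
  refine hdense.mono fun g hg z z' hzz' ↦ by_contra fun hne ↦ ?_
  exact mem_iInter₂.1 hg (z, z') hne hzz'

end GenericInjectivity

section Staircase

/-- For `1 ≤ c`, the continuous staircase which on each `[k, k + 1]`, `k ∈ ℤ`, rises linearly from
`k` to `k + 1` during the first `1 / c` of the interval and stays at `k + 1` afterwards. Rescaled
shifts of this function perturb the identity to maps which are mostly finite-valued. -/
noncomputable def staircase (c s : ℝ) : ℝ := ⌊s⌋ + min 1 (c * Int.fract s)

variable {c s : ℝ}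

theorem continuous_staircase (hc : 1 ≤ c) : Continuous (staircase c) := by
  have h : Continuous ((fun t : ℝ ↦ min 1 (c * t) - t) ∘ Int.fract) :=
    ContinuousOn.comp_fract'' (by fun_prop) (by simp [hc])
  convert continuous_id.add h using 1
  funext s
  change _ = s + (min 1 (c * Int.fract s) - Int.fract s)
  rw [staircase]
  linarith [Int.floor_add_fract s]

theorem abs_staircase_sub_le_one (hc : 0 ≤ c) : |staircase c s - s| ≤ 1 := by
  have hfract := Int.fract_nonneg s
  have hmin : 0 ≤ min 1 (c * Int.fract s) := by positivity
  rw [staircase, abs_le]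
  constructor <;>
    linarith [Int.floor_add_fract s, Int.fract_lt_one s, min_le_left 1 (c * Int.fract s)]

theorem staircase_eq_floor_add_one (hs : 1 ≤ c * Int.fract s) :
    staircase c s = (⌊s⌋ + 1 : ℤ) := by
  simp [staircase, hs]

theorem eq_of_fract_sub_div_lt {K : ℕ} {i j : Fin K} (hi : K * Int.fract (s - i / K) < 1)
    (hj : K * Int.fract (s - j / K) < 1) : i = j := by
  have hK : (0 : ℝ) < K := mod_cast i.pos
  have hi₀ : 0 ≤ K * Int.fract (s - i / K) := by positivity
  have hj₀ : 0 ≤ K * Int.fract (s - j / K) := by positivity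
  have key : ((j - i - K * (⌊s - i / K⌋ - ⌊s - j / K⌋) : ℤ) : ℝ) =
      K * Int.fract (s - i / K) - K * Int.fract (s - j / K) := by
    push_cast [Int.fract]
    field_simp
    ring
  have key_zero : (j - i - K * (⌊s - i / K⌋ - ⌊s - j / K⌋) : ℤ) = 0 := by
    refine Int.abs_lt_one_iff.1 ?_
    rw [← Int.cast_lt (R := ℝ), Int.cast_abs, key, Int.cast_one, abs_lt]
    constructor <;> linarith
  have : (j - i : ℤ) = 0 :=
    Int.eq_zero_of_abs_lt_dvd (m := K) ⟨_, sub_eq_zero.1 key_zero⟩ (by rw [abs_lt]; omega)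
  omega

/-- The identity of `X` is a uniform limit of families of continuous self-maps indexed by `κ` such
that, at every point, all members of the family except possibly one take values in a fixed finite
set. This is the only property of the interval on which the superposition theorem rests. -/
def HasStaircases (κ X : Type*) [PseudoMetricSpace X] : Prop :=
  ∀ δ > 0, ∃ (S : Set X) (r : κ → C(X, X)), S.Finite ∧ (∀ i x, dist (r i x) x ≤ δ) ∧
    ∀ x, {i | r i x ∉ S}.Subsingleton

theorem abs_mul_staircase_sub_le {h t : ℝ} (hh : 0 < h) (hc : 0 ≤ c) (ht : t ∈ Icc (0 : ℝ) 1) :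
    |h * staircase c (s / h - t) - s| ≤ 2 * h := by
  have hmul : h * staircase c (s / h - t) - s =
      h * (staircase c (s / h - t) - (s / h - t) - t) := by
    field_simp
    ring
  rw [hmul, abs_mul, abs_of_pos hh, mul_comm]
  gcongr
  calc |staircase c (s / h - t) - (s / h - t) - t|
      ≤ |staircase c (s / h - t) - (s / h - t)| + |t| := abs_sub _ _
    _ ≤ 1 + 1 := add_le_add (abs_staircase_sub_le_one hc) (by rw [abs_of_nonneg ht.1]; exact ht.2)
    _ = 2 := one_add_one_eq_two

theorem hasStaircases_Icc {a b : ℝ} (hab : a ≤ b) (K : ℕ) : HasStaircases (Fin K) (Icc a b) := by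
  intro δ hδ
  obtain ⟨h, hh, rfl⟩ : ∃ h > 0, δ = 2 * h := ⟨δ / 2, by positivity, by ring⟩
  have shift_mem (i : Fin K) : (i / K : ℝ) ∈ Icc (0 : ℝ) 1 :=
    ⟨by positivity, div_le_one_of_le₀ (mod_cast i.2.le) (by positivity)⟩
  have one_le_K (i : Fin K) : (1 : ℝ) ≤ K := mod_cast i.pos
  refine ⟨(fun z : ℤ ↦ projIcc a b hab (h * z)) '' Icc (⌊a / h - 1⌋ + 1) (⌊b / h⌋ + 1),
    fun i ↦ ⟨fun s ↦ projIcc a b hab (h * staircase K (s / h - i / K)), ?_⟩,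
    (finite_Icc _ _).image _, fun i s ↦ ?_, fun s i hi j hj ↦ ?_⟩
  · have := (continuous_staircase (one_le_K i)).comp
      (by fun_prop : Continuous fun s : Icc a b ↦ (s / h - i / K : ℝ))
    exact continuous_projIcc.comp (continuous_const.mul this)
  · calc dist (projIcc a b hab (h * staircase K (s / h - i / K))) s
        = |(projIcc a b hab (h * staircase K (s / h - i / K)) - projIcc a b hab s : ℝ)| := by
          rw [projIcc_val]; rfl
      _ ≤ |h * staircase K (s / h - i / K) - s| := abs_projIcc_sub_projIcc hab
      _ ≤ 2 * h := abs_mul_staircase_sub_le hh (by positivity) (shift_mem i)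
  · have mul_fract_lt_one {i : Fin K} (hi : projIcc a b hab (h * staircase K (s / h - i / K)) ∉
        (fun z : ℤ ↦ projIcc a b hab (h * z)) '' Icc (⌊a / h - 1⌋ + 1) (⌊b / h⌋ + 1)) :
        K * Int.fract (s / h - i / K : ℝ) < 1 := by
      refine not_le.1 fun hle ↦ hi ⟨⌊(s / h - i / K : ℝ)⌋ + 1, ⟨?_, ?_⟩, ?_⟩
      · have := s.2.1
        gcongr
        exact (shift_mem i).2
      · gcongr
        linarith [(shift_mem i).1, div_le_div_of_nonneg_right s.2.2 hh.le]
      · simp only [staircase_eq_floor_add_one hle]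
    exact eq_of_fract_sub_div_lt (mul_fract_lt_one hi) (mul_fract_lt_one hj)

end Staircase

section Superposition

variable {ι κ X : Type*} [Fintype ι] [Fintype κ] [TopologicalSpace X]

/-- The function `x ↦ ∑ q, g q (x q)` of several variables: the argument of one outer function in a
Kolmogorov superposition. -/
def sumCoord (g : ι → C(X, ℝ)) : C(ι → X, ℝ) := ∑ q, (g q).comp (ContinuousMap.eval q)

@[simp]
theorem sumCoord_apply (g : ι → C(X, ℝ)) (x : ι → X) : sumCoord g x = ∑ q, g q (x q) := by
  simp [sumCoord]

theorem continuous_sumCoord : Continuous (sumCoord : (ι → C(X, ℝ)) → C(ι → X, ℝ)) :=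
  continuous_finsetSum _ fun q _ ↦
    (ContinuousMap.continuous_precomp _).comp (continuous_apply q)

variable [CompactSpace X]

/-- The Kolmogorov superposition `x ↦ ∑ i, φ i (∑ q, ψ i q (x q))` with inner functions `ψ`, as a
continuous linear operator in the outer functions `φ`. The latter are taken bounded, so that they
form a Banach space. -/
noncomputable def superposition (ψ : κ → ι → C(X, ℝ)) : (κ → ℝ →ᵇ ℝ) →L[ℝ] C(ι → X, ℝ) :=
  ∑ i, (ContinuousMap.linearIsometryBoundedOfCompact
      (ι → X) ℝ ℝ).symm.toLinearIsometry.toContinuousLinearMap ∘L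
    compContinuousCLM ℝ ℝ (sumCoord (ψ i)) ∘L ContinuousLinearMap.proj i

theorem superposition_eq_sum (ψ : κ → ι → C(X, ℝ)) (φ : κ → ℝ →ᵇ ℝ) :
    superposition ψ φ = ∑ i, (φ i).toContinuousMap.comp (sumCoord (ψ i)) := by
  ext x
  simp [superposition]

theorem superposition_apply (ψ : κ → ι → C(X, ℝ)) (φ : κ → ℝ →ᵇ ℝ) (x : ι → X) :
    superposition ψ φ x = ∑ i, φ i (∑ q, ψ i q (x q)) := by
  simp [superposition_eq_sum]

theorem continuous_superposition_left (φ : κ → ℝ →ᵇ ℝ) :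
    Continuous fun ψ : κ → ι → C(X, ℝ) ↦ superposition ψ φ := by
  simp only [superposition_eq_sum]
  exact continuous_finsetSum _ fun i _ ↦ (ContinuousMap.continuous_postcomp _).comp
    (continuous_sumCoord.comp (continuous_apply i))

end Superposition

section Density

theorem dist_comp_comp_le {X Y Z : Type*} [TopologicalSpace X] [CompactSpace X]
    [TopologicalSpace Y] [CompactSpace Y] [PseudoMetricSpace Z] (g g' : C(Y, Z)) (r : C(X, Y)) :
    dist (g.comp r) (g'.comp r) ≤ dist g g' :=
  (ContinuousMap.dist_le dist_nonneg).2 fun x ↦ ContinuousMap.dist_apply_le_dist (r x)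

theorem HasStaircases.exists_dist_comp_le {ι κ X : Type*} [Finite ι] [Finite κ]
    [PseudoMetricSpace X] [CompactSpace X] (hX : HasStaircases κ X) (f : C(ι → X, ℝ))
    (ψ : κ → ι → C(X, ℝ)) {e ε : ℝ} (he : 0 < e) (hε : 0 < ε) :
    ∃ (S : Set X) (r : κ → C(X, X)), S.Finite ∧ (∀ x, {i | r i x ∉ S}.Subsingleton) ∧
      (∀ i x, |f x - f (r i ∘ x)| ≤ e) ∧ ∀ i q, dist ((ψ i q).comp (r i)) (ψ i q) ≤ ε := by
  have := Fintype.ofFinite ι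
  have := Fintype.ofFinite κ
  have hψ : UniformContinuous fun (x : X) i q ↦ ψ i q x :=
    CompactSpace.uniformContinuous_of_continuous (by fun_prop)
  obtain ⟨δ₁, hδ₁, hfδ⟩ := Metric.uniformContinuous_iff_le.1
    (CompactSpace.uniformContinuous_of_continuous f.continuous) e he
  obtain ⟨δ₂, hδ₂, hψδ⟩ := Metric.uniformContinuous_iff_le.1 hψ ε hε
  obtain ⟨S, r, hS, hr, hrS⟩ := hX (min δ₁ δ₂) (lt_min hδ₁ hδ₂)
  refine ⟨S, r, hS, hrS, fun i x ↦ ?_, fun i q ↦ (ContinuousMap.dist_le hε.le).2 fun x ↦ ?_⟩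
  · refine hfδ ((dist_pi_le_iff hδ₁.le).2 fun q ↦ ?_)
    rw [dist_comm]
    exact (hr i (x q)).trans (min_le_left _ _)
  · have := hψδ ((hr i x).trans (min_le_right _ _))
    exact (dist_pi_le_iff hε.le).1 ((dist_pi_le_iff hε.le).1 this i) q

theorem card_filter_exists_le {ι κ : Type*} [Fintype ι] [Fintype κ] {P : κ → ι → Prop}
    [DecidablePred fun i ↦ ∃ q, P i q] (hP : ∀ q, {i | P i q}.Subsingleton) :
    (Finset.univ.filter fun i ↦ ∃ q, P i q).card ≤ Fintype.card ι := by
  rw [← Fintype.card_subtype]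
  choose q hq using fun i : {i // ∃ q, P i q} ↦ i.2
  exact Fintype.card_le_of_injective q fun i j hij ↦ Subtype.ext (hP (q i) (hq i) (hij ▸ hq j))

theorem abs_sub_mul_sub_sum_le {κ : Type*} [Fintype κ] {N : ℕ} {B : Finset κ} (hB : B.card ≤ N)
    {y M e : ℝ} {v : κ → ℝ} (hy : |y| ≤ M) (hv : ∀ i, |v i| ≤ M) (he₀ : 0 ≤ e)
    (he : ∀ i ∉ B, |y - v i| ≤ e) :
    |(Fintype.card κ - N) * y - ∑ i, v i| ≤ N * M + Fintype.card κ * e := by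
  classical
  have hcard : (Bᶜ.card : ℝ) = Fintype.card κ - B.card := by
    rw [Finset.card_compl, Nat.cast_sub B.card_le_univ]
  have hBN : (B.card : ℝ) ≤ N := mod_cast hB
  have split : (Fintype.card κ - N) * y - ∑ i, v i =
      ∑ i ∈ Bᶜ, (y - v i) - ∑ i ∈ B, v i - (N - B.card) * y := by
    rw [← Finset.sum_add_sum_compl B v, Finset.sum_sub_distrib, Finset.sum_const, nsmul_eq_mul,
      hcard]
    ring
  have sum_good : |∑ i ∈ Bᶜ, (y - v i)| ≤ Bᶜ.card * e :=
    (Finset.abs_sum_le_sum_abs _ _).trans <| nsmul_eq_mul Bᶜ.card e ▸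
      Finset.sum_le_card_nsmul _ _ _ fun i hi ↦ he i (Finset.mem_compl.1 hi)
  have sum_bad : |∑ i ∈ B, v i| ≤ B.card * M :=
    (Finset.abs_sum_le_sum_abs _ _).trans <| nsmul_eq_mul B.card M ▸
      Finset.sum_le_card_nsmul _ _ _ fun i _ ↦ hv i
  have excess : |(N - B.card) * y| ≤ (N - B.card) * M := by
    rw [abs_mul, abs_of_nonneg (sub_nonneg.2 hBN)]
    exact mul_le_mul_of_nonneg_left hy (sub_nonneg.2 hBN)
  calc |(Fintype.card κ - N) * y - ∑ i, v i|
      ≤ Bᶜ.card * e + B.card * M + (N - B.card) * M := by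
        rw [split]
        exact (abs_sub _ _).trans (add_le_add ((abs_sub _ _).trans (add_le_add sum_good sum_bad))
          excess)
    _ = N * M + Bᶜ.card * e := by ring
    _ ≤ N * M + Fintype.card κ * e := by
        gcongr
        exact Bᶜ.card_le_univ

variable {ι κ X : Type*} [Fintype ι] [Fintype κ] [MetricSpace X] [CompactSpace X]

theorem exists_norm_smul_sub_superposition_le {S : Set X} (hS : S.Finite) {r : κ → C(X, X)}
    (hrS : ∀ x, {i | r i x ∉ S}.Subsingleton) {g : κ → ι → C(X, ℝ)}
    (hg : ∀ i, Function.Injective fun z : ι → S ↦ ∑ q, g i q (z q)) {f : C(ι → X, ℝ)} {e : ℝ}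
    (he : 0 ≤ e) (hf : ∀ i x, |f x - f (r i ∘ x)| ≤ e) :
    ∃ φ : κ → ℝ →ᵇ ℝ, ‖φ‖ ≤ ‖f‖ ∧
      ‖(Fintype.card κ - Fintype.card ι : ℝ) • f -
        superposition (fun i q ↦ (g i q).comp (r i)) φ‖ ≤
          Fintype.card ι * ‖f‖ + Fintype.card κ * e := by
  classical
  have := hS.to_subtype
  choose φ hφ hφf using fun i ↦ exists_boundedContinuousFunction_comp_eq (hg i)
    (norm_nonneg f) fun z ↦ f.norm_coe_le_norm fun q ↦ z q
  refine ⟨φ, (pi_norm_le_iff_of_nonneg (norm_nonneg f)).2 hφ,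
    (ContinuousMap.norm_le _ (by positivity)).2 fun x ↦ ?_⟩
  simp only [ContinuousMap.sub_apply, ContinuousMap.smul_apply, superposition_apply, smul_eq_mul,
    ContinuousMap.comp_apply]
  refine abs_sub_mul_sub_sum_le (card_filter_exists_le fun q ↦ hrS (x q)) (f.norm_coe_le_norm x)
    (fun i ↦ ((φ i).norm_coe_le_norm _).trans (hφ i)) he fun i hi ↦ ?_
  have hi : ∀ q, r i (x q) ∈ S := by simpa using hi
  rw [hφf i fun q ↦ ⟨r i (x q), hi q⟩]
  exact hf i x

theorem exists_norm_sub_superposition_lt {S : Set X} (hS : S.Finite) {r : κ → C(X, X)}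
    (hrS : ∀ x, {i | r i x ∉ S}.Subsingleton) {g : κ → ι → C(X, ℝ)}
    (hg : ∀ i, Function.Injective fun z : ι → S ↦ ∑ q, g i q (z q)) {f : C(ι → X, ℝ)} {e θ : ℝ}
    (he : 0 ≤ e) (hf : ∀ i x, |f x - f (r i ∘ x)| ≤ e)
    (hκ : Fintype.card ι < Fintype.card κ)
    (hθ : Fintype.card ι * ‖f‖ + Fintype.card κ * e <
      (Fintype.card κ - Fintype.card ι) * (θ * ‖f‖)) :
    ∃ φ : κ → ℝ →ᵇ ℝ, ‖φ‖ ≤ ‖f‖ ∧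
      ‖f - superposition (fun i q ↦ (g i q).comp (r i)) φ‖ < θ * ‖f‖ := by
  obtain ⟨φ, hφ, hφf⟩ := exists_norm_smul_sub_superposition_le hS hrS hg he hf
  have hscale : (1 : ℝ) ≤ Fintype.card κ - Fintype.card ι := by
    rw [le_sub_iff_add_le']
    exact_mod_cast hκ
  set scale : ℝ := Fintype.card κ - Fintype.card ι
  have hscale_pos : 0 < scale := by linarith
  have hscale_inv : 0 ≤ scale⁻¹ := inv_nonneg.2 hscale_pos.le
  refine ⟨scale⁻¹ • φ, ?_, ?_⟩
  · calc ‖scale⁻¹ • φ‖ = scale⁻¹ * ‖φ‖ := norm_smul_of_nonneg hscale_inv φ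
      _ ≤ ‖φ‖ := mul_le_of_le_one_left (norm_nonneg φ) (inv_le_one_of_one_le₀ hscale)
      _ ≤ ‖f‖ := hφ
  · calc ‖f - superposition _ (scale⁻¹ • φ)‖
        = scale⁻¹ * ‖scale • f - superposition _ φ‖ := by
          rw [← norm_smul_of_nonneg hscale_inv, smul_sub, inv_smul_smul₀ hscale_pos.ne', map_smul]
      _ < θ * ‖f‖ := (inv_mul_lt_iff₀ hscale_pos).2 (hφf.trans_lt hθ)

theorem HasStaircases.dense_setOf_exists_norm_sub_superposition_lt (hX : HasStaircases κ X)
    (hκ : Fintype.card ι < Fintype.card κ) {θ : ℝ}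
    (hθ : Fintype.card ι < θ * (Fintype.card κ - Fintype.card ι)) {f : C(ι → X, ℝ)} (hf : f ≠ 0) :
    Dense {ψ : κ → ι → C(X, ℝ) | ∃ φ : κ → ℝ →ᵇ ℝ,
      ‖φ‖ ≤ ‖f‖ ∧ ‖f - superposition ψ φ‖ < θ * ‖f‖} := by
  refine Metric.dense_iff.2 fun ψ₀ ε hε ↦ ?_
  have hgap : 0 < (θ * (Fintype.card κ - Fintype.card ι) - Fintype.card ι) * ‖f‖ :=
    mul_pos (sub_pos.2 hθ) (norm_pos_iff.2 hf)
  obtain ⟨e, he, he_gap⟩ := exists_pos_mul_lt hgap (Fintype.card κ)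
  obtain ⟨S, r, hS, hrS, hfr, hψr⟩ := hX.exists_dist_comp_le f ψ₀ he (half_pos hε)
  choose g hg hgψ using fun i ↦ (dense_setOf_injective_sum hS.countable).exists_dist_lt (ψ₀ i)
    (half_pos hε)
  refine ⟨fun i q ↦ (g i q).comp (r i), ?_,
    exists_norm_sub_superposition_lt hS hrS hg he.le hfr hκ (by linarith)⟩
  refine (dist_pi_lt_iff hε).2 fun i ↦ (dist_pi_lt_iff hε).2 fun q ↦ ?_
  have hgψ' : dist (g i q) (ψ₀ i q) < ε / 2 :=
    (dist_le_pi_dist (g i) (ψ₀ i) q).trans_lt (dist_comm (g i) (ψ₀ i) ▸ hgψ i)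
  calc dist ((g i q).comp (r i)) (ψ₀ i q)
      ≤ dist ((g i q).comp (r i)) ((ψ₀ i q).comp (r i)) +
          dist ((ψ₀ i q).comp (r i)) (ψ₀ i q) := dist_triangle ..
    _ ≤ dist (g i q) (ψ₀ i q) + ε / 2 := add_le_add (dist_comp_comp_le ..) (hψr i q)
    _ < ε := by linarith

end Density

section Kolmogorov

theorem HasStaircases.exists_surjective_superposition {ι κ X : Type*} [Fintype ι] [Fintype κ]
    [MetricSpace X] [CompactSpace X] (hX : HasStaircases κ X)
    (hκ : 2 * Fintype.card ι < Fintype.card κ) :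
    ∃ ψ : κ → ι → C(X, ℝ), Function.Surjective (superposition ψ) := by
  have hκ' : 2 * (Fintype.card ι : ℝ) < Fintype.card κ := mod_cast hκ
  have hι : (0 : ℝ) ≤ Fintype.card ι := by positivity
  have hscale : (0 : ℝ) < Fintype.card κ - Fintype.card ι := by linarith
  obtain ⟨θ, hθ, hθ₁⟩ : ∃ θ : ℝ, Fintype.card ι / (Fintype.card κ - Fintype.card ι : ℝ) < θ ∧
      θ < 1 := exists_between <| by rw [div_lt_one hscale]; linarith
  have hθ₀ : 0 ≤ θ := (div_nonneg hι hscale.le).trans hθ.le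
  obtain ⟨D, hD_countable, hD⟩ := TopologicalSpace.exists_countable_dense C(ι → X, ℝ)
  let good (f : C(ι → X, ℝ)) : Set (κ → ι → C(X, ℝ)) :=
    {ψ | ∃ φ : κ → ℝ →ᵇ ℝ, ‖φ‖ ≤ ‖f‖ ∧ ‖f - superposition ψ φ‖ < θ * ‖f‖}
  have isOpen_good (f : C(ι → X, ℝ)) : IsOpen (good f) := by
    simp only [good, ofPred_exists, ofPred_and]
    exact isOpen_iUnion fun φ ↦ isOpen_const.inter <|
      isOpen_lt (continuous_const.sub (continuous_superposition_left φ)).norm continuous_const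
  have : CompleteSpace (κ → ι → C(X, ℝ)) := inferInstance
  have : TopologicalSpace.IsCompletelyPseudoMetrizableSpace (κ → ι → C(X, ℝ)) := inferInstance
  have : BaireSpace (κ → ι → C(X, ℝ)) := .of_completelyPseudoMetrizable
  have dense_good : Dense (⋂ f ∈ D \ {0}, good f) :=
    dense_biInter_of_isOpen (fun f _ ↦ isOpen_good f) (hD_countable.mono sdiff_subset) fun f hf ↦
      hX.dense_setOf_exists_norm_sub_superposition_lt (by omega) ((div_lt_iff₀ hscale).1 hθ) hf.2
  obtain ⟨ψ, hψ⟩ := dense_good.nonempty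
  refine ⟨ψ, surjective_of_dense_of_exists_norm_sub_le hD zero_le_one hθ₀ hθ₁ fun f hfD hf ↦ ?_⟩
  obtain ⟨φ, hφ, hφf⟩ := mem_iInter₂.1 hψ f ⟨hfD, hf⟩
  exact ⟨φ, by rwa [one_mul], hφf.le⟩

theorem exists_superposition_of_isBounded {ι : Type*} [Fintype ι] {A : Set (ι → ℝ)}
    (hA : Bornology.IsBounded A) {K : ℕ} (hK : 2 * Fintype.card ι < K) :
    ∃ ψ : Fin K → ι → ℝ → ℝ, (∀ i q, Continuous (ψ i q)) ∧
      ∀ f : (ι → ℝ) → ℝ, Continuous f → ∃ φ : Fin K → ℝ → ℝ, (∀ i, Continuous (φ i)) ∧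
        ∀ x ∈ A, f x = ∑ i, φ i (∑ q, ψ i q (x q)) := by
  obtain ⟨R, hR, hAR⟩ := hA.exists_pos_norm_le
  have hRR : -R ≤ R := by linarith
  have coord_mem {x : ι → ℝ} (hx : x ∈ A) (q : ι) : x q ∈ Icc (-R) R :=
    abs_le.1 ((norm_le_pi_norm x q).trans (hAR x hx))
  obtain ⟨ψ, hψ⟩ := (hasStaircases_Icc hRR K).exists_surjective_superposition (ι := ι)
    (by rwa [Fintype.card_fin])
  refine ⟨fun i q ↦ IccExtend hRR (ψ i q), fun i q ↦ (ψ i q).continuous.Icc_extend',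
    fun f hf ↦ ?_⟩
  obtain ⟨φ, hφ⟩ := hψ ⟨fun x ↦ f fun q ↦ x q, by fun_prop⟩
  refine ⟨fun i ↦ φ i, fun i ↦ (φ i).continuous, fun x hx ↦ ?_⟩
  have := DFunLike.congr_fun hφ fun q ↦ ⟨x q, coord_mem hx q⟩
  rw [superposition_apply] at this
  simp only [IccExtend_of_mem hRR _ (coord_mem hx _), this, ContinuousMap.coe_mk]

theorem feature_enriched_kolmogorov_superposition_general {n m : ℕ} {A : Set (Fin n → ℝ)}
    (hA : Bornology.IsBounded A) {u : Fin m → (Fin n → ℝ) → ℝ}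
    (hu : ∀ j, Bornology.IsBounded (u j '' A)) :
    ∃ ψ : Fin (2 * (n + m) + 1) → Fin (n + m) → ℝ → ℝ, (∀ i q, Continuous (ψ i q)) ∧
      ∀ f : (Fin (n + m) → ℝ) → ℝ, Continuous f →
        ∃ φ : Fin (2 * (n + m) + 1) → ℝ → ℝ, (∀ i, Continuous (φ i)) ∧
          ∀ x ∈ A, f (Fin.append x (fun j => u j x)) =
            ∑ i, φ i ((∑ q : Fin n, ψ i (Fin.castAdd m q) (x q)) +
              ∑ j : Fin m, ψ i (Fin.natAdd n j) (u j x)) := by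
  have hbounded : Bornology.IsBounded ((fun x ↦ Fin.append x fun j ↦ u j x) '' A) := by
    refine Bornology.forall_isBounded_image_eval_iff.1 <| Fin.addCases (fun q ↦ ?_) fun j ↦ ?_
    · simpa [image_image] using hA.image_eval q
    · simpa [image_image] using hu j
  obtain ⟨ψ, hψ, hrep⟩ := exists_superposition_of_isBounded hbounded (K := 2 * (n + m) + 1)
    (by simp)
  refine ⟨ψ, hψ, fun f hf ↦ ?_⟩
  obtain ⟨φ, hφ, hfφ⟩ := hrep f hf
  exact ⟨φ, hφ, fun x hx ↦ by
    simpa [Fin.sum_univ_add] using hfφ _ (mem_image_of_mem _ hx)⟩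

end Kolmogorov

/-- **Feature-Enriched Kolmogorov Superposition Theorem.**
Given continuous feature maps `u j : [0,1]^n → ℝ` and a continuous
`f : ℝ^(n+m) → ℝ`, there exist continuous outer functions `φ i` and continuous
inner functions `ψ i q : ℝ → ℝ` (`i = 1, …, 2(n+m)+1`, `q = 1, …, n+m`) such
that for all `x ∈ [0,1]^n`,
`f (x, u 1 x, …, u m x) = ∑ i, φ i (∑ q ψ i q (x q) + ∑ j ψ i (n+j) (u j x))`. -/
theorem feature_enriched_kolmogorov_superposition
    (n m : ℕ) (hn : 0 < n) (hm : 0 < m)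
    (u : Fin m → (Fin n → ℝ) → ℝ)
    (hu : ∀ j, ContinuousOn (u j) (Set.Icc (0 : Fin n → ℝ) 1))
    (f : (Fin (n + m) → ℝ) → ℝ) (hf : Continuous f) :
    ∃ (φ : Fin (2 * (n + m) + 1) → ℝ → ℝ)
      (ψ : Fin (2 * (n + m) + 1) → Fin (n + m) → ℝ → ℝ),
      (∀ i, Continuous (φ i)) ∧
      (∀ i q, Continuous (ψ i q)) ∧
      (∀ x ∈ Set.Icc (0 : Fin n → ℝ) 1,
        f (Fin.append x (fun j => u j x)) =
          ∑ i, φ i ((∑ q : Fin n, ψ i (Fin.castAdd m q) (x q)) +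
            ∑ j : Fin m, ψ i (Fin.natAdd n j) (u j x))) := by
  obtain ⟨ψ, hψ, hrep⟩ := feature_enriched_kolmogorov_superposition_general
    (Metric.isBounded_Icc 0 1) fun j ↦ (isCompact_Icc.image_of_continuousOn (hu j)).isBounded
  exact (hrep f hf).imp fun φ ⟨hφ, hfφ⟩ ↦ ⟨ψ, hφ, hψ, hfφ⟩
end
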